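/- Let k ≥ 1 and let S_Q, S_1*, …, S_k*, T_1, …, T_k be finite sets over a common universe. Define C_0 = S_Q and C_i = C_{i−1} ∪ T_i for 1 ≤ i ≤ k, and write OPT = S_Q ∪ S_1* ∪ ⋯ ∪ S_k*. Suppose that for every i ∈ {1, …, k}, k·|T_i \ C_{i−1}| ≥ Σ_{j=1}^{k} |S_j* \ C_{i−1}|. Then |C_k| ≥ |OPT|·(1 − (1 − 1/k)^k) + (1 − 1/k)^k·|S_Q|. -/

import Mathlib

/-!
Write `d i = |OPT| - |C i|` for the deficit after `i` steps. Since `S_Q ⊆ C i`, the elements of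
`OPT` not yet covered lie in some `Sstar j \ C i`, so the union bound and the gain hypothesis give
`d i ≤ ∑ j, |Sstar j \ C i| ≤ k * |T i \ C i| = k * (d i - d (i + 1))`. Each step therefore
contracts the deficit by the factor `1 - 1 / k`, and `k` steps give the claim.
-/

/-- Union bound: `S ∪ ⋃ j, A j` exceeds a set `C ⊇ S` by at most the total of the marginals
`|A j \ C|`. -/
lemma card_union_biUnion_le {α ι : Type*} [DecidableEq α] [Fintype ι]
    (S C : Finset α) (A : ι → Finset α) (h : S ⊆ C) :
    (S ∪ Finset.univ.biUnion A).card ≤ C.card + ∑ j, (A j \ C).card := by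
  have hsub : S ∪ Finset.univ.biUnion A ⊆ C ∪ Finset.univ.biUnion (fun j => A j \ C) := by
    intro x hx
    have hS := @h x
    simp only [Finset.mem_union, Finset.mem_biUnion, Finset.mem_univ, true_and,
      Finset.mem_sdiff] at hx ⊢
    by_cases hC : x ∈ C
    · exact Or.inl hC
    · rcases hx with hx | ⟨j, hj⟩
      · exact Or.inl (hS hx)
      · exact Or.inr ⟨j, hj, hC⟩
  exact (Finset.card_le_card hsub).trans
    ((Finset.card_union_le _ _).trans (Nat.add_le_add_left Finset.card_biUnion_le _))

/-- Inequality (21): under the per-iteration gain hypothesis,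
`|C_k| ≥ |OPT|·(1 − (1 − 1/k)^k) + (1 − 1/k)^k·|S_Q|`. -/
theorem stmt_8 {α : Type*} [DecidableEq α] (k : ℕ) (hk : 1 ≤ k)
    (S_Q : Finset α) (Sstar T : Fin k → Finset α)
    (C : ℕ → Finset α) (hC0 : C 0 = S_Q)
    (hCsucc : ∀ i : Fin k, C ((i : ℕ) + 1) = C (i : ℕ) ∪ T i)
    (hgain : ∀ i : Fin k,
      (∑ j, (Sstar j \ C (i : ℕ)).card) ≤ k * (T i \ C (i : ℕ)).card) :
    ((S_Q ∪ Finset.univ.biUnion Sstar).card : ℝ) * (1 - (1 - 1 / (k : ℝ)) ^ k) +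
        (1 - 1 / (k : ℝ)) ^ k * (S_Q.card : ℝ) ≤ ((C k).card : ℝ) := by
  have hk1 : (1 : ℝ) ≤ k := by exact_mod_cast hk
  have hk0 : (0 : ℝ) < k := by linarith
  have hr : 0 ≤ 1 - 1 / (k : ℝ) := by
    rw [sub_nonneg, div_le_one hk0]
    exact hk1
  have key : ∀ i ≤ k, S_Q ⊆ C i ∧
      ((S_Q ∪ Finset.univ.biUnion Sstar).card : ℝ) - (C i).card ≤
        (1 - 1 / (k : ℝ)) ^ i *
          (((S_Q ∪ Finset.univ.biUnion Sstar).card : ℝ) - S_Q.card) := by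
    intro i
    induction i with
    | zero => simp [hC0]
    | succ i ih =>
      intro hi
      obtain ⟨hsub, hle⟩ := ih (by omega)
      have hC : C (i + 1) = C i ∪ T ⟨i, hi⟩ := hCsucc ⟨i, hi⟩
      have hg : (∑ j, (Sstar j \ C i).card) ≤ k * (T ⟨i, hi⟩ \ C i).card := hgain ⟨i, hi⟩
      refine ⟨hC ▸ hsub.trans Finset.subset_union_left, ?_⟩
      have hcard : (C (i + 1)).card = (C i).card + (T ⟨i, hi⟩ \ C i).card := by
        rw [hC, ← Finset.union_sdiff_self_eq_union,
          Finset.card_union_of_disjoint Finset.disjoint_sdiff]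
      have hopt : ((S_Q ∪ Finset.univ.biUnion Sstar).card : ℝ) ≤
          (C i).card + k * (T ⟨i, hi⟩ \ C i).card := by
        exact_mod_cast (card_union_biUnion_le S_Q (C i) Sstar hsub).trans
          (Nat.add_le_add_left hg _)
      have hdiv : (((S_Q ∪ Finset.univ.biUnion Sstar).card : ℝ) - (C i).card) / k ≤
          (T ⟨i, hi⟩ \ C i).card := by
        rw [div_le_iff₀ hk0]
        linarith
      have hmul := mul_le_mul_of_nonneg_left hle hr
      rw [← mul_assoc, ← pow_succ'] at hmul
      refine le_trans ?_ hmul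
      rw [hcard, Nat.cast_add, sub_mul, one_mul, one_div_mul_eq_div]
      linarith
  have := (key k le_rfl).2
  linarith
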